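/- Let A be an n×m integer matrix with m ≥ n. Then A : ℤ^m → ℤ^n is surjective if and only if for every prime p the reduced matrix A/p, with entries (A/p)_{ij} = A_{ij} mod p, is surjective as a linear map (ℤ/pℤ)^m → (ℤ/pℤ)^n. -/

import Mathlib

/-!
If `A : R^m → R^n` is not surjective, its range lies in a maximal proper submodule `L`, because
`R^n` is finitely generated. The quotient `R^n / L` is simple, so it is killed by a maximal ideal
`P`; hence `L` contains `P • R^n` as well, and `A` is not surjective modulo `P` either.
-/

theorem ideal_smul_top_eq_pi {R ι : Type*} [Semiring R] [Finite ι] (I : Ideal R)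
    [I.IsTwoSided] :
    I • (⊤ : Submodule R (ι → R)) = Submodule.pi Set.univ fun _ ↦ I := by
  classical
  cases nonempty_fintype ι
  apply le_antisymm
  · exact Submodule.smul_le.mpr fun r hr x _ i _ ↦ I.mul_mem_right (x i) hr
  · intro x hx
    rw [pi_eq_sum_univ' x]
    exact Submodule.sum_mem _ fun i _ ↦ Submodule.smul_mem_smul (hx i trivial) trivial

theorem annihilator_quotient_smul_top_le {R M : Type*} [Ring R] [AddCommGroup M] [Module R M]
    (N : Submodule R M) : Module.annihilator R (M ⧸ N) • ⊤ ≤ N :=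
  Submodule.smul_le.mpr fun r hr x _ ↦ by
    rw [← Submodule.Quotient.mk_eq_zero, Submodule.Quotient.mk_smul]
    exact Module.mem_annihilator.mp hr _

theorem eq_top_iff_forall_isMaximal_sup_smul_top {R M : Type*} [CommRing R] [AddCommGroup M]
    [Module R M] [Module.Finite R M] {N : Submodule R M} :
    N = ⊤ ↔ ∀ P : Ideal R, P.IsMaximal → N ⊔ P • ⊤ = ⊤ := by
  refine ⟨fun hN P _ ↦ by rw [hN, top_sup_eq], fun h ↦ ?_⟩
  by_contra hN
  obtain ⟨L, hL, hNL⟩ := (eq_top_or_exists_le_coatom N).resolve_left hN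
  have : IsSimpleModule R (M ⧸ L) := isSimpleModule_iff_isCoatom.mpr hL
  have hsup : N ⊔ Module.annihilator R (M ⧸ L) • ⊤ = ⊤ :=
    h _ IsSimpleModule.annihilator_isMaximal
  exact hL.ne_top <| top_unique <|
    hsup.ge.trans <| sup_le hNL <| annihilator_quotient_smul_top_le L

section Matrix

variable {R m n : Type*} [CommRing R] [Fintype m] [Finite n]

theorem surjective_mulVecLin_map_algebraMap_iff {S : Type*} [CommRing S] [Algebra R S]
    (hS : Function.Surjective (algebraMap R S)) (A : Matrix n m R) :
    Function.Surjective (A.map (algebraMap R S)).mulVecLin ↔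
      A.mulVecLin.range ⊔ RingHom.ker (algebraMap R S) • ⊤ = ⊤ := by
  let π : (n → R) →ₗ[R] (n → S) := (Algebra.linearMap R S).compLeft n
  have hrange : π.range = ⊤ := LinearMap.range_eq_top.mpr hS.comp_left
  have hker : π.ker = RingHom.ker (algebraMap R S) • ⊤ :=
    (LinearMap.ker_compLeft _ _).trans (ideal_smul_top_eq_pi _).symm
  have hcomm : (A.map (algebraMap R S)).mulVecLin ∘ (algebraMap R S ∘ ·) = π ∘ₗ A.mulVecLin := by
    ext v i
    exact (RingHom.map_mulVec (algebraMap R S) A v i).symm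
  rw [← Function.Surjective.of_comp_iff _ hS.comp_left, hcomm, ← LinearMap.range_eq_top,
    LinearMap.range_comp, LinearMap.map_eq_top_iff hrange, hker]

theorem surjective_mulVecLin_map_quotientMk_iff (P : Ideal R) (A : Matrix n m R) :
    Function.Surjective (A.map (Ideal.Quotient.mk P)).mulVecLin ↔
      A.mulVecLin.range ⊔ P • ⊤ = ⊤ := by
  have h := surjective_mulVecLin_map_algebraMap_iff (S := R ⧸ P) Ideal.Quotient.mk_surjective A
  rwa [Ideal.Quotient.algebraMap_eq, Ideal.mk_ker] at h

theorem stmt6_general (A : Matrix n m R) :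
    Function.Surjective A.mulVecLin ↔
      ∀ P : Ideal R, P.IsMaximal →
        Function.Surjective (A.map (Ideal.Quotient.mk P)).mulVecLin := by
  simp only [← LinearMap.range_eq_top (f := A.mulVecLin), surjective_mulVecLin_map_quotientMk_iff,
    eq_top_iff_forall_isMaximal_sup_smul_top (N := A.mulVecLin.range)]

theorem surjective_mulVecLin_map_quotientMk_span_iff (p : ℕ) (A : Matrix n m ℤ) :
    Function.Surjective (A.map (Ideal.Quotient.mk (Ideal.span {(p : ℤ)}))).mulVecLin ↔
      Function.Surjective (A.map (Int.cast : ℤ → ZMod p)).mulVecLin := by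
  rw [surjective_mulVecLin_map_quotientMk_iff, ← ZMod.ker_intCastRingHom]
  exact (surjective_mulVecLin_map_algebraMap_iff ZMod.intCast_surjective A).symm

end Matrix

theorem isMaximal_int_iff {P : Ideal ℤ} :
    P.IsMaximal ↔ ∃ p : ℕ, p.Prime ∧ P = Ideal.span {(p : ℤ)} := by
  constructor
  · intro hP
    have hbot : P ≠ ⊥ := Ring.ne_bot_of_isMaximal_of_not_isField hP Int.not_isField
    refine ⟨(Submodule.IsPrincipal.generator P).natAbs, Int.prime_iff_natAbs_prime.mp <|
      Submodule.IsPrincipal.prime_generator_of_isPrime P hbot, ?_⟩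
    rw [Int.span_natAbs, Ideal.span_singleton_generator]
  · rintro ⟨p, hp, rfl⟩
    have := Fact.mk hp
    infer_instance

theorem forall_isMaximal_int_iff {Q : Ideal ℤ → Prop} :
    (∀ P : Ideal ℤ, P.IsMaximal → Q P) ↔ ∀ p : ℕ, p.Prime → Q (Ideal.span {(p : ℤ)}) := by
  simp only [isMaximal_int_iff]
  constructor
  · exact fun h p hp ↦ h _ ⟨p, hp, rfl⟩
  · rintro h _ ⟨p, hp, rfl⟩
    exact h p hp

theorem stmt6 (n m : ℕ) (hnm : n ≤ m) (A : Matrix (Fin n) (Fin m) ℤ) :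
    Function.Surjective A.mulVecLin ↔
      ∀ p : ℕ, p.Prime →
        Function.Surjective (A.map (Int.cast : ℤ → ZMod p)).mulVecLin := by
  simpa only [forall_isMaximal_int_iff, surjective_mulVecLin_map_quotientMk_span_iff] using
    stmt6_general A
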